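/- Let E1, E2 ∈ ℝ^{N×N} be symmetric positive definite matrices and e1, e2 ∈ ℝ^N. Then 𝓔(E1, e1) ⊆ 𝓔(E2, e2) if and only if there exists λ ≥ 0 such that the (N+1)×(N+1) block matrix G(λ) = [[λ E1 − E2, E2 e2 − λ E1 e1], [(E2 e2 − λ E1 e1)ᵀ, λ e1ᵀ E1 e1 − e2ᵀ E2 e2 − λ + 1]] is positive semidefinite. -/

import Mathlib

open Matrix

/-- The `(N+1) × (N+1)` symmetric block matrix `[[A, b], [bᵀ, c]]`. -/
def quadBlock (N : ℕ) (A : Matrix (Fin N) (Fin N) ℝ) (b : Fin N → ℝ) (c : ℝ) :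
    Matrix (Fin N ⊕ Unit) (Fin N ⊕ Unit) ℝ :=
  Matrix.fromBlocks A (Matrix.of fun i _ => b i) (Matrix.of fun _ j => b j)
    (Matrix.of fun _ _ => c)

/-!
The inclusion says that one quadratic function is nonpositive wherever another one is, so the
multiplier `λ` comes from the S-lemma. For quadratic forms `p`, `q` such that `q ≤ 0` wherever
`p ≤ 0`, and vectors with `p u < 0 < p v`, the line through `v` in direction `u` meets the cone
`p = 0` once on each side of `v`; that `q ≤ 0` at both crossing points gives
`q v / p v ≤ q u / p u`, and any `λ` separating the two families of quotients works. Homogenising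
replaces quadratic functions by quadratic forms, and the implication extends from the hyperplane
`t = 1` to the hyperplane at infinity `t = 0` by moving slightly towards the centre of the first
ellipsoid, where its quadratic function is negative.
-/

section SLemma

open Filter Topology

lemma exists_neg_pos_roots {a b c : ℝ} (ha : a < 0) (hc : 0 < c) :
    ∃ x y : ℝ, x < 0 ∧ 0 < y ∧ a * (x * x) + b * x + c = 0 ∧ a * (y * y) + b * y + c = 0 ∧
      a * (x * y) = c := by
  have hdiscrim : 0 ≤ discrim a b c := by
    rw [discrim]
    nlinarith [mul_pos (neg_pos.2 ha) hc, sq_nonneg b]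
  obtain ⟨x, hx⟩ := exists_quadratic_eq_zero ha.ne
    ⟨√(discrim a b c), (Real.mul_self_sqrt hdiscrim).symm⟩
  have hmonic : ∀ r, a * (r * r) + b * r + c = 0 ↔ r * r - -b / a * r + c / a = 0 := by
    intro r
    have hfactor : a * (r * r) + b * r + c = a * (r * r - -b / a * r + c / a) := by
      field_simp [ha.ne]
      ring
    rw [hfactor, mul_eq_zero, or_iff_right ha.ne]
  obtain ⟨y, hy, -, hxy⟩ := vieta_formula_quadratic ((hmonic x).1 hx)
  rw [← hmonic] at hy
  have hprod : a * (x * y) = c := by rw [hxy, mul_div_cancel₀ _ ha.ne]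
  have hneg : x * y < 0 := hxy ▸ div_neg_of_pos_of_neg hc ha
  rcases mul_neg_iff.1 hneg with ⟨hx0, hy0⟩ | ⟨hx0, hy0⟩
  · exact ⟨y, x, hy0, hx0, hy, hx, by rwa [mul_comm y x]⟩
  · exact ⟨x, y, hx0, hy0, hx, hy, hprod⟩

variable {V : Type*} [AddCommGroup V] [Module ℝ V] {p q : QuadraticForm ℝ V}

lemma quadraticForm_map_smul_add (p : QuadraticForm ℝ V) (t : ℝ) (u v : V) :
    p (t • u + v) = p u * (t * t) + QuadraticMap.polar p u v * t + p v := by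
  rw [QuadraticMap.map_add p, QuadraticMap.map_smul, QuadraticMap.polar_smul_left, smul_eq_mul,
    smul_eq_mul]
  ring

lemma div_le_div_of_forall_nonpos_imp_nonpos (h : ∀ z, p z ≤ 0 → q z ≤ 0) {u v : V}
    (hu : p u < 0) (hv : 0 < p v) : q v / p v ≤ q u / p u := by
  obtain ⟨x, y, hx, hy, hpx, hpy, hprod⟩ :=
    exists_neg_pos_roots (b := QuadraticMap.polar p u v) hu hv
  rw [← quadraticForm_map_smul_add] at hpx hpy
  have hqx := h _ hpx.le
  have hqy := h _ hpy.le
  rw [quadraticForm_map_smul_add] at hqx hqy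
  -- Weighting the two inequalities by `y` and `-x` cancels the polar terms.
  have hq : (y - x) * (q v - x * y * q u) ≤ 0 := by
    linarith [mul_nonpos_of_nonneg_of_nonpos hy.le hqx,
      mul_nonneg_of_nonpos_of_nonpos hx.le hqy]
  have hxy : q v ≤ x * y * q u :=
    sub_nonpos.1 (nonpos_of_mul_nonpos_right hq (by linarith))
  calc q v / p v ≤ x * y * q u / p v := div_le_div_of_nonneg_right hxy hv.le
    _ = q u / p u := by
      rw [← hprod, mul_comm (p u), mul_div_mul_left _ _ (mul_ne_zero hx.ne hy.ne')]

/-- The **S-lemma** for quadratic forms. -/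
theorem forall_nonpos_imp_nonpos_iff_exists_le_mul {z₀ : V} (hz₀ : p z₀ < 0) :
    (∀ z, p z ≤ 0 → q z ≤ 0) ↔ ∃ l : ℝ, 0 ≤ l ∧ ∀ z, q z ≤ l * p z := by
  refine ⟨fun h => ?_, fun ⟨l, hl, hle⟩ z hz =>
    (hle z).trans (mul_nonpos_of_nonneg_of_nonpos hl hz)⟩
  obtain ⟨l, hlower, hupper⟩ := exists_between_of_forall_le
    (s := insert 0 ((fun v => q v / p v) '' {v | 0 < p v}))
    (t := (fun u => q u / p u) '' {u | p u < 0})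
    (Set.insert_nonempty _ _) ⟨_, z₀, hz₀, rfl⟩ (by
      rintro _ (rfl | ⟨v, hv, rfl⟩) _ ⟨u, hu, rfl⟩
      · exact div_nonneg_of_nonpos (h u hu.le) hu.le
      · exact div_le_div_of_forall_nonpos_imp_nonpos h hu hv)
  refine ⟨l, hlower (Set.mem_insert _ _), fun z => ?_⟩
  rcases lt_trichotomy (p z) 0 with hz | hz | hz
  · exact (le_div_iff_of_neg hz).1 (hupper ⟨z, hz, rfl⟩)
  · rw [hz, mul_zero]
    exact h z hz.le
  · exact (div_le_iff₀ hz).1 (hlower (Set.mem_insert_of_mem _ ⟨z, hz, rfl⟩))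

lemma nonpos_of_forall_pos_map_smul_add_nonpos {u v : V}
    (h : ∀ t : ℝ, 0 < t → q (t • u + v) ≤ 0) : q v ≤ 0 := by
  have hcont : Continuous fun t : ℝ => q (t • u + v) := by
    simp only [quadraticForm_map_smul_add]
    fun_prop
  have hlim : Tendsto (fun t : ℝ => q (t • u + v)) (𝓝[>] 0) (𝓝 (q v)) := by
    simpa using (hcont.tendsto 0).mono_left nhdsWithin_le_nhds
  exact le_of_tendsto hlim (eventually_mem_nhdsWithin.mono h)

lemma forall_nonpos_imp_nonpos_of_hyperplane {ℓ : V →ₗ[ℝ] ℝ} {z₀ : V} (hℓ : ℓ z₀ = 1)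
    (hz₀ : p z₀ < 0) (h : ∀ z, ℓ z = 1 → p z ≤ 0 → q z ≤ 0) (z : V) (hz : p z ≤ 0) :
    q z ≤ 0 := by
  have hoff : ∀ z, ℓ z ≠ 0 → p z ≤ 0 → q z ≤ 0 := by
    intro z hℓz hz
    have hscale : 0 < (ℓ z)⁻¹ * (ℓ z)⁻¹ := mul_self_pos.2 (inv_ne_zero hℓz)
    have hq := h ((ℓ z)⁻¹ • z) (by simp [hℓz]) (by
      rw [QuadraticMap.map_smul]
      exact mul_nonpos_of_nonneg_of_nonpos hscale.le hz)
    rw [QuadraticMap.map_smul] at hq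
    exact nonpos_of_mul_nonpos_right hq hscale
  by_cases hℓz : ℓ z = 0
  · -- Passing from `z` to `-z` keeps `p z` and `q z` and flips the sign of the polar term.
    wlog hpolar : QuadraticMap.polar p z₀ z ≤ 0 generalizing z
    · simpa using this (-z) (by simpa using hz) (by simpa using hℓz)
        (by simpa using (not_le.1 hpolar).le)
    refine nonpos_of_forall_pos_map_smul_add_nonpos (u := z₀) fun t ht => hoff _ ?_ ?_
    · simpa [hℓ, hℓz] using ht.ne'
    · rw [quadraticForm_map_smul_add]
      linarith [mul_nonpos_of_nonpos_of_nonneg hz₀.le (mul_self_nonneg t),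
        mul_nonpos_of_nonpos_of_nonneg hpolar ht.le]
  · exact hoff z hℓz hz

/-- The inhomogeneous **S-lemma**: the restrictions of quadratic forms to `ℓ = 1` are the quadratic
functions on that affine hyperplane. -/
theorem forall_hyperplane_nonpos_imp_nonpos_iff_exists_le_mul {ℓ : V →ₗ[ℝ] ℝ} {z₀ : V}
    (hℓ : ℓ z₀ = 1) (hz₀ : p z₀ < 0) :
    (∀ z, ℓ z = 1 → p z ≤ 0 → q z ≤ 0) ↔ ∃ l : ℝ, 0 ≤ l ∧ ∀ z, q z ≤ l * p z := by
  rw [← forall_nonpos_imp_nonpos_iff_exists_le_mul hz₀]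
  exact ⟨forall_nonpos_imp_nonpos_of_hyperplane hℓ hz₀, fun h z _ => h z⟩

end SLemma

section Ellipsoid

variable {n : Type*} [Fintype n]

lemma posSemidef_smul_sub_iff {A B : Matrix n n ℝ} (hA : A.IsHermitian) (hB : B.IsHermitian)
    (l : ℝ) : (l • A - B).PosSemidef ↔ ∀ z, z ⬝ᵥ B *ᵥ z ≤ l * (z ⬝ᵥ A *ᵥ z) := by
  have hHerm : (l • A - B).IsHermitian := (hA.smul (.all l)).sub hB
  simp only [posSemidef_iff_dotProduct_mulVec, hHerm, true_and, star_trivial, sub_mulVec,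
    smul_mulVec, dotProduct_sub, dotProduct_smul, smul_eq_mul, sub_nonneg]

/-- The matrix of the homogenisation `(x, t) ↦ (x - t e)ᵀ E (x - t e) - t²` of the quadratic
function defining the ellipsoid of shape `E` and centre `e`; the `Unit` coordinate is `t`. -/
def ellipsoidMatrix (E : Matrix n n ℝ) (e : n → ℝ) : Matrix (n ⊕ Unit) (n ⊕ Unit) ℝ :=
  fromBlocks E (replicateCol Unit (-(E *ᵥ e))) (replicateRow Unit (-(E *ᵥ e)))
    (of fun _ _ => e ⬝ᵥ E *ᵥ e - 1)

lemma isHermitian_ellipsoidMatrix {E : Matrix n n ℝ} (hE : E.IsHermitian) (e : n → ℝ) :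
    (ellipsoidMatrix E e).IsHermitian :=
  hE.fromBlocks (by simp) (by ext; simp)

lemma dotProduct_ellipsoidMatrix_mulVec {E : Matrix n n ℝ} (hE : E.IsHermitian) (e s : n → ℝ) :
    Sum.elim s 1 ⬝ᵥ ellipsoidMatrix E e *ᵥ Sum.elim s 1 = (s - e) ⬝ᵥ E *ᵥ (s - e) - 1 := by
  have hsymm : e ⬝ᵥ E *ᵥ s = s ⬝ᵥ E *ᵥ e := by
    rw [dotProduct_mulVec, ← mulVec_transpose, (isHermitian_iff_isSymm.1 hE).eq, dotProduct_comm]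
  have hcol : replicateCol Unit (-(E *ᵥ e)) *ᵥ 1 = -(E *ᵥ e) := by
    ext i
    simp [mulVec, dotProduct]
  have hcorner : (of fun _ _ : Unit => e ⬝ᵥ E *ᵥ e - 1) *ᵥ 1 = fun _ => e ⬝ᵥ E *ᵥ e - 1 := by
    ext
    simp [mulVec, dotProduct]
  rw [ellipsoidMatrix, fromBlocks_mulVec, sumElim_dotProduct_sumElim]
  simp only [Sum.elim_comp_inl, Sum.elim_comp_inr, hcol, hcorner, replicateRow_mulVec_eq_const]
  simp only [dotProduct_add, mulVec_sub, sub_dotProduct, dotProduct_sub, hsymm, dotProduct_neg,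
    neg_dotProduct, one_dotProduct, Fintype.sum_unique, Function.const_apply,
    dotProduct_comm (E *ᵥ e) s]
  ring

lemma smul_ellipsoidMatrix_sub (E1 E2 : Matrix n n ℝ) (e1 e2 : n → ℝ) (l : ℝ) :
    l • ellipsoidMatrix E1 e1 - ellipsoidMatrix E2 e2 =
      fromBlocks (l • E1 - E2) (replicateCol Unit (E2 *ᵥ e2 - l • (E1 *ᵥ e1)))
        (replicateRow Unit (E2 *ᵥ e2 - l • (E1 *ᵥ e1)))
        (of fun _ _ => l * (e1 ⬝ᵥ E1 *ᵥ e1) - e2 ⬝ᵥ E2 *ᵥ e2 - l + 1) := by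
  ext (i | i) (j | j) <;> simp only [ellipsoidMatrix, Matrix.sub_apply, Matrix.smul_apply,
    fromBlocks_apply₁₁, fromBlocks_apply₁₂, fromBlocks_apply₂₁, fromBlocks_apply₂₂,
    replicateCol_apply, replicateRow_apply, of_apply, Pi.neg_apply, Pi.sub_apply, Pi.smul_apply,
    smul_eq_mul] <;> ring

lemma ellipsoid_subset_iff_forall {E1 E2 : Matrix n n ℝ} (hE1 : E1.IsHermitian)
    (hE2 : E2.IsHermitian) (e1 e2 : n → ℝ) :
    {s : n → ℝ | (s - e1) ⬝ᵥ E1 *ᵥ (s - e1) ≤ 1} ⊆ {s | (s - e2) ⬝ᵥ E2 *ᵥ (s - e2) ≤ 1} ↔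
      ∀ z : n ⊕ Unit → ℝ, z (Sum.inr ()) = 1 → z ⬝ᵥ ellipsoidMatrix E1 e1 *ᵥ z ≤ 0 →
        z ⬝ᵥ ellipsoidMatrix E2 e2 *ᵥ z ≤ 0 := by
  constructor
  · intro h z hz
    obtain ⟨s, rfl⟩ : ∃ s : n → ℝ, z = Sum.elim s 1 :=
      ⟨z ∘ Sum.inl, by ext (i | i) <;> simp [hz]⟩
    simpa only [dotProduct_ellipsoidMatrix_mulVec, hE1, hE2, sub_nonpos,
      Set.mem_ofPred_eq] using @h s
  · intro h s
    simpa only [dotProduct_ellipsoidMatrix_mulVec, hE1, hE2, sub_nonpos,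
      Set.mem_ofPred_eq] using h (Sum.elim s 1) rfl

theorem stmt_8_general {E1 E2 : Matrix n n ℝ} (hE1 : E1.IsHermitian) (hE2 : E2.IsHermitian)
    (e1 e2 : n → ℝ) :
    {s : n → ℝ | (s - e1) ⬝ᵥ E1 *ᵥ (s - e1) ≤ 1} ⊆ {s | (s - e2) ⬝ᵥ E2 *ᵥ (s - e2) ≤ 1} ↔
      ∃ lam : ℝ, 0 ≤ lam ∧
        (fromBlocks (lam • E1 - E2) (replicateCol Unit (E2 *ᵥ e2 - lam • (E1 *ᵥ e1)))
          (replicateRow Unit (E2 *ᵥ e2 - lam • (E1 *ᵥ e1)))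
          (of fun _ _ => lam * (e1 ⬝ᵥ E1 *ᵥ e1) - e2 ⬝ᵥ E2 *ᵥ e2 - lam + 1)).PosSemidef := by
  classical
  have heval (M : Matrix (n ⊕ Unit) (n ⊕ Unit) ℝ) (z : n ⊕ Unit → ℝ) :
      z ⬝ᵥ M *ᵥ z = M.toQuadraticForm' z := (toLinearMap₂'_apply' M z z).symm
  have hcentre : (ellipsoidMatrix E1 e1).toQuadraticForm' (Sum.elim e1 1) < 0 := by
    rw [← heval, dotProduct_ellipsoidMatrix_mulVec hE1]
    simp
  simp only [ellipsoid_subset_iff_forall hE1 hE2, ← smul_ellipsoidMatrix_sub,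
    posSemidef_smul_sub_iff (isHermitian_ellipsoidMatrix hE1 e1)
      (isHermitian_ellipsoidMatrix hE2 e2), heval]
  exact forall_hyperplane_nonpos_imp_nonpos_iff_exists_le_mul
    (ℓ := LinearMap.proj (Sum.inr ())) rfl hcentre

end Ellipsoid

/-- Containment of ellipsoids: `𝓔(E1, e1) ⊆ 𝓔(E2, e2)` iff there exists `λ ≥ 0` such that
`G(λ) = [[λ E1 − E2, E2 e2 − λ E1 e1], [(E2 e2 − λ E1 e1)ᵀ, λ e1ᵀ E1 e1 − e2ᵀ E2 e2 − λ + 1]]`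
is positive semidefinite. -/
theorem stmt_8 (N : ℕ) (E1 E2 : Matrix (Fin N) (Fin N) ℝ)
    (hE1 : E1.PosDef) (hE2 : E2.PosDef) (e1 e2 : Fin N → ℝ) :
    {s : Fin N → ℝ | (s - e1) ⬝ᵥ E1 *ᵥ (s - e1) ≤ 1} ⊆
        {s : Fin N → ℝ | (s - e2) ⬝ᵥ E2 *ᵥ (s - e2) ≤ 1} ↔
      ∃ lam : ℝ, 0 ≤ lam ∧
        (quadBlock N (lam • E1 - E2) (E2 *ᵥ e2 - lam • (E1 *ᵥ e1))
          (lam * (e1 ⬝ᵥ E1 *ᵥ e1) - e2 ⬝ᵥ E2 *ᵥ e2 - lam + 1)).PosSemidef :=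
  stmt_8_general hE1.isHermitian hE2.isHermitian e1 e2
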